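/- arXiv:2110.15523 — 2 statements merged into one kernel-verified Lean document; each statement's English description precedes it below -/
import Mathlib

section
/- For each 0 ≤ K ≤ N, the Neumann vector h_{n,K} = binom(N,K)^{−1/2} Σ_{|γ|=K} h_γ is a unit eigenvector of L(B_N) with eigenvalue 2K; the vectors h_{n,K} are mutually orthogonal for different K; and ⟨φ, h_{n,K}⟩ = 0 for every eigenvector φ of L(B_N) that vanishes at both the all-zeros vertex 𝟘 and the all-ones vertex 𝟙. -/
open Complex Finset
open scoped Real Classical

noncomputable section

/-- Vertices of the Boolean cube B_N. -/
abbrev Vtx (N : ℕ) := Fin N → ZMod 2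

/-- The all-zeros vertex 𝟘. -/
def vZero (N : ℕ) : Vtx N := fun _ => 0

/-- The all-ones vertex 𝟙. -/
def vOne (N : ℕ) : Vtx N := fun _ => 1

/-- The inner product on ℓ²: ⟨f,g⟩ = Σ f·conj(g). -/
def ip {α : Type*} [Fintype α] (f g : α → ℂ) : ℂ :=
  ∑ x, f x * (starRingEnd ℂ) (g x)

/-- Cube adjacency: differ in exactly one coordinate. -/
def cubeAdj {N : ℕ} (v w : Vtx N) : Prop :=
  (Finset.univ.filter fun i => v i ≠ w i).card = 1

instance {N : ℕ} (v w : Vtx N) : Decidable (cubeAdj v w) := by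
  unfold cubeAdj; infer_instance

/-- Unnormalized Laplacian of the Boolean cube. -/
def cubeLap (N : ℕ) (f : Vtx N → ℂ) : Vtx N → ℂ :=
  fun v => ∑ w ∈ Finset.univ.filter (fun w => cubeAdj v w), (f v - f w)

/-- Hamming weight: the number of nonzero coordinates. -/
def wt {N : ℕ} (γ : Vtx N) : ℕ := (Finset.univ.filter fun i => γ i ≠ 0).card

/-- Hadamard vector h_γ(v) = 2^{−N/2}·(−1)^{Σ v_i γ_i}. -/
def had (N : ℕ) (γ : Vtx N) : Vtx N → ℂ :=
  fun v => (Real.sqrt (2 ^ N) : ℂ)⁻¹ * (-1) ^ (∑ i, (v i).val * (γ i).val)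

/-- The Neumann vector h_{n,K} = binom(N,K)^{−1/2} Σ_{|γ|=K} h_γ. -/
def neu (N K : ℕ) : Vtx N → ℂ :=
  fun v => (Real.sqrt (N.choose K) : ℂ)⁻¹ *
    ∑ γ ∈ Finset.univ.filter (fun γ : Vtx N => wt γ = K), had N γ v

lemma had_conj {N : ℕ} (γ v : Vtx N) : (starRingEnd ℂ) (had N γ v) = had N γ v := by
  simp [had]

lemma neu_conj {N K : ℕ} (v : Vtx N) : (starRingEnd ℂ) (neu N K v) = neu N K v := by
  simp [neu, had_conj]

lemma zmod_cases (a : ZMod 2) : a = 0 ∨ a = 1 := by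
  revert a; decide

lemma zmod_val_one : (1 : ZMod 2).val = 1 := rfl

lemma sqrt_sq_c (N : ℕ) : ((Real.sqrt (2 ^ N) : ℂ)⁻¹) * (Real.sqrt (2 ^ N) : ℂ)⁻¹ = (2 ^ N : ℂ)⁻¹ := by
  rw [← mul_inv, ← Complex.ofReal_mul, Real.mul_self_sqrt (by positivity)]
  simp

lemma had_orth {N : ℕ} (γ δ : Vtx N) :
    ∑ v, had N γ v * had N δ v = if γ = δ then 1 else 0 := by
  have h1 : ∀ v : Vtx N, had N γ v * had N δ v =
      (2 ^ N : ℂ)⁻¹ * ∏ i, ((-1 : ℂ) ^ ((v i).val * (γ i).val) * (-1) ^ ((v i).val * (δ i).val)) := by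
    intro v
    rw [← sqrt_sq_c, Finset.prod_mul_distrib, Finset.prod_pow_eq_pow_sum,
      Finset.prod_pow_eq_pow_sum]
    unfold had
    ring
  have h2 : ∀ a b : ZMod 2, ∑ x : ZMod 2, ((-1 : ℂ) ^ (x.val * a.val) * (-1) ^ (x.val * b.val))
      = if a = b then 2 else 0 := by
    intro a b
    have hu : ∀ f : ZMod 2 → ℂ, ∑ x, f x = f 0 + f 1 := fun f => Fin.sum_univ_two f
    rw [hu]
    rcases zmod_cases a with rfl | rfl <;> rcases zmod_cases b with rfl | rfl <;>
      simp [zmod_val_one] <;> norm_num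
  simp_rw [h1]
  rw [← Finset.mul_sum]
  have h3 := Fintype.prod_sum (fun (i : Fin N) (x : ZMod 2) =>
    ((-1 : ℂ) ^ (x.val * (γ i).val) * (-1) ^ (x.val * (δ i).val)))
  rw [← h3]
  simp_rw [h2]
  split_ifs with h
  · subst h; simp
  · obtain ⟨i, hi⟩ := Function.ne_iff.mp h
    rw [Finset.prod_eq_zero (Finset.mem_univ i) (by simp [hi])]
    simp

lemma lap_eq {N : ℕ} (f : Vtx N → ℂ) (v : Vtx N) :
    cubeLap N f v = ∑ i, (f v - f (v + Pi.single i 1)) := by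
  unfold cubeLap
  symm
  refine Finset.sum_bij (fun i _ => v + Pi.single i 1) ?_ ?_ ?_ ?_
  · intro i _
    simp only [Finset.mem_filter, Finset.mem_univ, true_and]
    unfold cubeAdj
    rw [Finset.card_eq_one]
    refine ⟨i, ?_⟩
    ext j
    by_cases h : j = i
    · subst h; simp
    · simp [h]
  · intro i _ j _ h
    have h' := congrFun (add_left_cancel h) i
    by_contra hne
    simp [hne] at h'
  · intro w hw
    simp only [Finset.mem_filter, Finset.mem_univ, true_and] at hw
    unfold cubeAdj at hw
    rw [Finset.card_eq_one] at hw
    obtain ⟨i, hi⟩ := hw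
    refine ⟨i, Finset.mem_univ _, ?_⟩
    ext j
    have hj := Finset.ext_iff.mp hi j
    simp only [Finset.mem_filter, Finset.mem_univ, true_and, Finset.mem_singleton] at hj
    by_cases h : j = i
    · subst h
      have := hj.mpr rfl
      simp only [Pi.add_apply, Pi.single_eq_same]
      revert this
      generalize v j = a
      generalize w j = b
      revert a b; decide
    · have : v j = w j := by
        by_contra h'; exact h (hj.mp h')
      simp [h, this]
  · intros; rfl

lemma had_flip {N : ℕ} (γ v : Vtx N) (i : Fin N) :
    had N γ (v + Pi.single i 1) = (if γ i ≠ 0 then -1 else 1) * had N γ v := by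
  unfold had
  rw [← Finset.prod_pow_eq_pow_sum, ← Finset.prod_pow_eq_pow_sum,
    ← Finset.mul_prod_erase _ _ (Finset.mem_univ i),
    ← Finset.mul_prod_erase (a := i) _ (fun j => (-1 : ℂ) ^ ((v j).val * (γ j).val)) (Finset.mem_univ i)]
  have h1 : ∏ x ∈ Finset.univ.erase i, (-1 : ℂ) ^ (((v + Pi.single i 1 : Vtx N) x).val * (γ x).val)
      = ∏ x ∈ Finset.univ.erase i, (-1 : ℂ) ^ ((v x).val * (γ x).val) := by
    refine Finset.prod_congr rfl fun j hj => ?_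
    have : j ≠ i := Finset.ne_of_mem_erase hj
    simp [this]
  have h2 : (-1 : ℂ) ^ (((v + Pi.single i 1 : Vtx N) i).val * (γ i).val)
      = (if γ i ≠ 0 then -1 else 1) * (-1 : ℂ) ^ ((v i).val * (γ i).val) := by
    simp only [Pi.add_apply, Pi.single_eq_same]
    have h11 : (1 + 1 : ZMod 2) = 0 := rfl
    rcases zmod_cases (v i) with h | h <;> rcases zmod_cases (γ i) with h' | h' <;>
      simp [h, h', zmod_val_one, h11]
  rw [h1, h2]
  ring

lemma had_lap {N : ℕ} (γ v : Vtx N) :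
    ∑ i, (had N γ v - had N γ (v + Pi.single i 1)) = 2 * (wt γ : ℂ) * had N γ v := by
  have : ∀ i, had N γ v - had N γ (v + Pi.single i 1) =
      (if γ i ≠ 0 then 1 else 0) * (2 * had N γ v) := by
    intro i
    rw [had_flip]
    split_ifs <;> ring
  simp_rw [this]
  rw [← Finset.sum_mul, Finset.sum_boole]
  unfold wt
  ring

lemma lap_symm {N : ℕ} (f g : Vtx N → ℂ) :
    ∑ v, cubeLap N f v * g v = ∑ v, f v * cubeLap N g v := by
  simp_rw [lap_eq, Finset.sum_mul, Finset.mul_sum]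
  rw [Finset.sum_comm, Finset.sum_comm (s := Finset.univ (α := Vtx N))]
  refine Finset.sum_congr rfl fun i _ => ?_
  simp_rw [sub_mul, mul_sub]
  rw [Finset.sum_sub_distrib, Finset.sum_sub_distrib]
  congr 1
  refine Fintype.sum_equiv (Equiv.addRight (Pi.single i 1)) _ _ fun v => ?_
  have : (Pi.single i 1 + Pi.single i 1 : Vtx N) = 0 := by
    rw [← Pi.single_add]
    have h11 : (1 + 1 : ZMod 2) = 0 := rfl
    simp [h11]
  simp [add_assoc, this]

lemma card_wt (N K : ℕ) :
    (Finset.univ.filter (fun γ : Vtx N => wt γ = K)).card = N.choose K := by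
  have : (Finset.powersetCard K (Finset.univ : Finset (Fin N))).card = N.choose K := by simp
  rw [← this]
  refine Finset.card_bij (fun γ _ => Finset.univ.filter fun i => γ i ≠ 0) ?_ ?_ ?_
  · intro γ h
    simp only [Finset.mem_filter, Finset.mem_univ, true_and] at h
    rw [Finset.mem_powersetCard]
    exact ⟨Finset.subset_univ _, h⟩
  · intro γ _ δ _ h
    ext i
    have hi := Finset.ext_iff.mp h i
    simp only [Finset.mem_filter, Finset.mem_univ, true_and] at hi
    rcases zmod_cases (γ i) with h | h <;> rcases zmod_cases (δ i) with h' | h' <;>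
      simp_all
  · intro s hs
    rw [Finset.mem_powersetCard] at hs
    have h : (Finset.univ.filter fun i => (fun i => if i ∈ s then (1 : ZMod 2) else 0) i ≠ 0) = s := by
      ext i; simp
    refine ⟨fun i => if i ∈ s then 1 else 0, ?_, h⟩
    simp only [Finset.mem_filter, Finset.mem_univ, true_and]
    unfold wt
    rw [h]; exact hs.2

lemma neu_ip (N K K' : ℕ) : ip (neu N K) (neu N K') =
    (Real.sqrt (N.choose K) : ℂ)⁻¹ * (Real.sqrt (N.choose K') : ℂ)⁻¹ *
      (if K = K' then (N.choose K : ℂ) else 0) := by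
  unfold ip
  simp_rw [neu_conj]
  unfold neu
  have : ∀ v : Vtx N, (Real.sqrt (N.choose K) : ℂ)⁻¹ *
    (∑ γ ∈ Finset.univ.filter (fun γ : Vtx N => wt γ = K), had N γ v) *
    ((Real.sqrt (N.choose K') : ℂ)⁻¹ *
    ∑ γ ∈ Finset.univ.filter (fun γ : Vtx N => wt γ = K'), had N γ v) =
    (Real.sqrt (N.choose K) : ℂ)⁻¹ * (Real.sqrt (N.choose K') : ℂ)⁻¹ *
     ∑ γ ∈ Finset.univ.filter (fun γ : Vtx N => wt γ = K),
     ∑ δ ∈ Finset.univ.filter (fun γ : Vtx N => wt γ = K'), had N γ v * had N δ v := by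
    intro v
    rw [← Finset.sum_mul_sum]
    ring
  simp_rw [this]
  rw [← Finset.mul_sum]
  congr 1
  rw [Finset.sum_comm]
  have h2 : ∀ γ ∈ Finset.univ.filter (fun γ : Vtx N => wt γ = K),
     ∑ v, ∑ δ ∈ Finset.univ.filter (fun γ : Vtx N => wt γ = K'), had N γ v * had N δ v
      = if K = K' then 1 else 0 := by
    intro γ hγ
    simp only [Finset.mem_filter, Finset.mem_univ, true_and] at hγ
    rw [Finset.sum_comm]
    simp_rw [had_orth]
    rw [Finset.sum_ite_eq]
    simp [hγ]
  rw [Finset.sum_congr rfl h2, Finset.sum_const, card_wt]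
  simp

lemma had_complete {N : ℕ} (v : Vtx N) :
    ∑ γ, had N γ v = if v = vZero N then (Real.sqrt (2 ^ N) : ℂ) else 0 := by
  have hs : ∀ γ, had N γ v = (Real.sqrt (2 ^ N) : ℂ) * (had N v γ * had N (vZero N) γ) := by
    intro γ
    have h0 : (Real.sqrt (2 ^ N) : ℂ) ≠ 0 := by
      rw [Complex.ofReal_ne_zero]; positivity
    have : had N (vZero N) γ = (Real.sqrt (2 ^ N) : ℂ)⁻¹ := by simp [had, vZero]
    rw [this]
    unfold had
    simp_rw [mul_comm (γ _).val]
    field_simp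
  simp_rw [hs]
  rw [← Finset.mul_sum, had_orth]
  simp

lemma ip_neu {N K : ℕ} (φ : Vtx N → ℂ) : ip φ (neu N K) = (Real.sqrt (N.choose K) : ℂ)⁻¹ *
    ∑ γ ∈ Finset.univ.filter (fun γ : Vtx N => wt γ = K), ∑ v, φ v * had N γ v := by
  unfold ip
  simp_rw [neu_conj]
  unfold neu
  rw [Finset.sum_comm, Finset.mul_sum]
  refine Finset.sum_congr rfl fun v _ => ?_
  rw [← Finset.mul_sum]
  ring

/-- each h_{n,K} is a unit eigenvector of L(B_N) with eigenvalue
2K; the h_{n,K} are mutually orthogonal; and each h_{n,K} is orthogonal to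
every eigenvector of L(B_N) vanishing at both 𝟘 and 𝟙. -/
theorem stmt5 (N : ℕ) (hN : 1 ≤ N) :
    (∀ K ≤ N, ip (neu N K) (neu N K) = 1) ∧
    (∀ K ≤ N, cubeLap N (neu N K) = fun v => ((2 * K : ℕ) : ℂ) * neu N K v) ∧
    (∀ K ≤ N, ∀ K' ≤ N, K ≠ K' → ip (neu N K) (neu N K') = 0) ∧
    (∀ K ≤ N, ∀ (φ : Vtx N → ℂ) (μ : ℂ), φ ≠ 0 →
      cubeLap N φ = (fun v => μ * φ v) →
      φ (vZero N) = 0 → φ (vOne N) = 0 → ip φ (neu N K) = 0) := by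
  refine ⟨?_, ?_, ?_, ?_⟩
  · intro K hK
    have hpos : (0 : ℝ) < N.choose K := by exact_mod_cast Nat.choose_pos hK
    rw [neu_ip, if_pos rfl, ← mul_inv, ← Complex.ofReal_mul, Real.mul_self_sqrt hpos.le]
    rw [Complex.ofReal_natCast]
    exact inv_mul_cancel₀ (by exact_mod_cast hpos.ne')
  · intro K hK
    funext v
    rw [lap_eq]
    unfold neu
    simp_rw [← mul_sub, ← Finset.sum_sub_distrib]
    rw [← Finset.mul_sum, Finset.sum_comm]
    simp_rw [had_lap]
    have : ∑ γ ∈ Finset.univ.filter (fun γ : Vtx N => wt γ = K), 2 * (wt γ : ℂ) * had N γ v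
        = ∑ γ ∈ Finset.univ.filter (fun γ : Vtx N => wt γ = K), 2 * (K : ℂ) * had N γ v := by
      refine Finset.sum_congr rfl fun γ hγ => ?_
      rw [(Finset.mem_filter.mp hγ).2]
    rw [this, ← Finset.mul_sum]
    push_cast
    ring
  · intro K _ K' _ h
    rw [neu_ip, if_neg h, mul_zero]
  · intro K hK φ μ _ hφ h0 _
    have key : ∀ γ, (μ - 2 * (wt γ : ℂ)) * ∑ v, φ v * had N γ v = 0 := by
      intro γ
      have h := lap_symm φ (had N γ)
      have e1 : ∀ v, cubeLap N (had N γ) v = 2 * (wt γ : ℂ) * had N γ v := by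
        intro v; rw [lap_eq, had_lap]
      simp_rw [e1, hφ] at h
      rw [sub_mul, Finset.mul_sum, Finset.mul_sum, sub_eq_zero]
      convert h using 2 <;> ring
    rw [ip_neu]
    by_cases hμ : μ = 2 * (K : ℂ)
    · have e : ∑ γ ∈ Finset.univ.filter (fun γ : Vtx N => wt γ = K), ∑ v, φ v * had N γ v
          = ∑ γ, ∑ v, φ v * had N γ v := by
        refine Finset.sum_subset (Finset.subset_univ _) fun γ _ hγ => ?_
        simp only [Finset.mem_filter, Finset.mem_univ, true_and] at hγ
        refine (mul_eq_zero.mp (key γ)).resolve_left ?_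
        rw [hμ, ← mul_sub]
        refine mul_ne_zero two_ne_zero (sub_ne_zero.mpr ?_)
        exact_mod_cast Ne.symm hγ
      rw [e, Finset.sum_comm]
      simp_rw [← Finset.mul_sum, had_complete]
      simp [h0]
    · rw [Finset.sum_eq_zero, mul_zero]
      intro γ hγ
      refine (mul_eq_zero.mp (key γ)).resolve_left ?_
      rw [(Finset.mem_filter.mp hγ).2]
      exact sub_ne_zero.mpr hμ
end
end

section
/- Let m = 4m' + 1 with m' ≥ 1 and let 3 ≤ K < N. Then the dimension of PW_{2K}(B_N □ C_m) equals m·Σ_{κ=0}^{K−2} binom(N,κ) + ((m+1)/2)·binom(N,K−1) + binom(N,K). -/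
open Complex Finset
open scoped Real Classical

noncomputable section

/-- Unnormalized Laplacian of the cycle graph C_m:
(L f)(ℓ) = 2 f(ℓ) − f(ℓ+1) − f(ℓ−1). -/
def cycLap (m : ℕ) (f : ZMod m → ℂ) : ZMod m → ℂ :=
  fun ℓ => 2 * f ℓ - f (ℓ + 1) - f (ℓ - 1)

/-- Unnormalized Laplacian of the Cartesian product B_N □ C_m: each vertex
(u,ℓ) has its cube neighbors (w,ℓ) and its cycle neighbors (u,ℓ±1). -/
def prodLap (N m : ℕ) (F : Vtx N × ZMod m → ℂ) : Vtx N × ZMod m → ℂ :=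
  fun x => cubeLap N (fun u => F (u, x.2)) x.1 +
    (2 * F x - F (x.1, x.2 + 1) - F (x.1, x.2 - 1))

/-- Paley–Wiener space of B_N: span of Laplacian eigenvectors with
eigenvalue at most Ω. -/
def PWcube (N : ℕ) (Ω : ℝ) : Submodule ℂ (Vtx N → ℂ) :=
  Submodule.span ℂ {f | ∃ μ : ℝ, μ ≤ Ω ∧ cubeLap N f = fun v => (μ : ℂ) * f v}

/-- Paley–Wiener space of C_m: span of Laplacian eigenvectors with
eigenvalue at most Ω. -/
def PWcyc (m : ℕ) (Ω : ℝ) : Submodule ℂ (ZMod m → ℂ) :=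
  Submodule.span ℂ {g | ∃ μ : ℝ, μ ≤ Ω ∧ cycLap m g = fun ℓ => (μ : ℂ) * g ℓ}

/-- Paley–Wiener space of B_N □ C_m: span of Laplacian eigenvectors with
eigenvalue at most Ω. -/
def PWprod (N m : ℕ) (Ω : ℝ) : Submodule ℂ (Vtx N × ZMod m → ℂ) :=
  Submodule.span ℂ {F | ∃ μ : ℝ, μ ≤ Ω ∧ prodLap N m F = fun x => (μ : ℂ) * F x}

/-- Truncation Q to the zero B_N-slice. -/
def Qslice (N m : ℕ) (F : Vtx N × ZMod m → ℂ) : Vtx N × ZMod m → ℂ :=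
  fun x => if x.2 = 0 then F x else 0

/-- Component (i): span of all f ⊗ g with f ∈ PW_{2K−4}(B_N), g ∈ ℓ²(C_m). -/
def S1 (N K m : ℕ) : Submodule ℂ (Vtx N × ZMod m → ℂ) :=
  Submodule.span ℂ {F | ∃ (f : Vtx N → ℂ) (g : ZMod m → ℂ),
    f ∈ PWcube N (2 * (K : ℝ) - 4) ∧ F = fun x => f x.1 * g x.2}

/-- Component (ii): span of all f ⊗ g with f ∈ Λ_{2K−2}(B_N), g ∈ PW_2(C_m). -/
def S2 (N K m : ℕ) : Submodule ℂ (Vtx N × ZMod m → ℂ) :=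
  Submodule.span ℂ {F | ∃ (f : Vtx N → ℂ) (g : ZMod m → ℂ),
    (cubeLap N f = fun v => ((2 * (K : ℝ) - 2 : ℝ) : ℂ) * f v) ∧
    g ∈ PWcyc m 2 ∧ F = fun x => f x.1 * g x.2}

/-- Component (iii): span of all f ⊗ g with f ∈ Λ_{2K}(B_N), g constant. -/
def S3 (N K m : ℕ) : Submodule ℂ (Vtx N × ZMod m → ℂ) :=
  Submodule.span ℂ {F | ∃ (f : Vtx N → ℂ) (c : ℂ),
    (cubeLap N f = fun v => ((2 * (K : ℝ) : ℝ) : ℂ) * f v) ∧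
    F = fun x => f x.1 * c}

def chr (N m : ℕ) [NeZero m] (p : Finset (Fin N) × ZMod m) : AddChar (Vtx N × ZMod m) ℂ where
  toFun x := (∏ i ∈ p.1, ZMod.stdAddChar (x.1 i)) * ZMod.stdAddChar (p.2 * x.2)
  map_zero_eq_one' := by simp
  map_add_eq_mul' x y := by
    simp only [Prod.fst_add, Prod.snd_add, Pi.add_apply, mul_add, AddChar.map_add_eq_mul, Finset.prod_mul_distrib]
    ring

lemma chr_apply (N m : ℕ) [NeZero m] (p : Finset (Fin N) × ZMod m) (x : Vtx N × ZMod m) :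
    chr N m p x = (∏ i ∈ p.1, ZMod.stdAddChar (x.1 i)) * ZMod.stdAddChar (p.2 * x.2) := rfl

lemma std2 : (ZMod.stdAddChar (1 : ZMod 2) : ℂ) = -1 := by
  have h := ZMod.stdAddChar_coe (N := 2) 1
  have e : 2 * (π : ℂ) * Complex.I * ((1:ℤ):ℂ) / ((2:ℕ):ℂ) = π * Complex.I := by
    push_cast; ring
  rw [e, Complex.exp_pi_mul_I] at h
  simpa using h

lemma chr_single (N m : ℕ) [NeZero m] (p : Finset (Fin N) × ZMod m) (i : Fin N) :
    chr N m p (Pi.single i 1, 0) = if i ∈ p.1 then -1 else 1 := by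
  rw [chr_apply]
  simp only [mul_zero, AddChar.map_zero_eq_one, mul_one]
  have : ∀ k ∈ p.1, (ZMod.stdAddChar ((Pi.single i 1 : Vtx N) k) : ℂ) = if k = i then -1 else 1 := by
    intro k _
    by_cases h : k = i
    · subst h; simp [std2]
    · simp [h]
  rw [Finset.prod_congr rfl this, Finset.prod_ite_eq']

lemma chr_inj (N m : ℕ) [NeZero m] : Function.Injective (chr N m) := by
  rintro ⟨S, j⟩ ⟨T, k⟩ h
  have h1 : S = T := by
    ext i
    have := congrArg (fun c => c ((Pi.single i 1 : Vtx N), (0 : ZMod m))) h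
    simp only [chr_single] at this
    by_cases a : i ∈ S <;> by_cases b : i ∈ T <;> simp [a, b] at this ⊢ <;> norm_num at this
  have h2 : j = k := by
    have := congrArg (fun c => c ((0 : Vtx N), (1 : ZMod m))) h
    simp [chr_apply] at this
    exact ZMod.injective_stdAddChar this
  rw [h1, h2]

lemma cubeAdj_iff {N : ℕ} (v w : Vtx N) : cubeAdj v w ↔ ∃ i, v + Pi.single i 1 = w := by
  unfold cubeAdj
  rw [Finset.card_eq_one]
  have key : ∀ a b : ZMod 2, a ≠ b ↔ a + 1 = b := by decide
  constructor
  · rintro ⟨i, hi⟩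
    refine ⟨i, ?_⟩
    ext k
    have := Finset.ext_iff.1 hi k
    simp only [Finset.mem_filter, Finset.mem_univ, true_and, Finset.mem_singleton] at this
    by_cases h : k = i
    · subst h; simp [(key _ _).1 (this.2 rfl)]
    · have h2 : v k = w k := by by_contra h3; exact h (this.1 h3)
      simp [h, h2]
  · rintro ⟨i, rfl⟩
    refine ⟨i, ?_⟩
    ext k
    by_cases h : k = i
    · subst h; simp
    · simp [h]

lemma cubeLap_eq (N : ℕ) (f : Vtx N → ℂ) (v : Vtx N) :
    cubeLap N f v = ∑ i, (f v - f (v + Pi.single i 1)) := by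
  unfold cubeLap
  symm
  refine Finset.sum_bij (fun i _ => v + Pi.single i 1) ?_ ?_ ?_ ?_
  · intro i _; simp [cubeAdj_iff]
  · intro a _ b _ h
    have h := add_left_cancel h
    by_contra hab
    have := congrFun h a
    simp [hab] at this
  · intro w hw
    simp [cubeAdj_iff] at hw
    simpa using hw
  · intros; rfl

def eigv (N m : ℕ) (p : Finset (Fin N) × ZMod m) : ℝ :=
  2 * p.1.card + (2 - 2 * Real.cos (2 * π * p.2.val / m))

lemma std_cos (m : ℕ) [NeZero m] (j : ZMod m) :
    (ZMod.stdAddChar j : ℂ) + ZMod.stdAddChar (-j) = 2 * (Real.cos (2 * π * j.val / m) : ℝ) := by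
  have h1 := ZMod.stdAddChar_coe (N := m) (j.val : ℤ)
  have h2 := ZMod.stdAddChar_coe (N := m) (-(j.val : ℤ))
  have hj : ((j.val : ℤ) : ZMod m) = j := by rw [Int.cast_natCast, ZMod.natCast_zmod_val]
  rw [Int.cast_neg, hj] at h2
  rw [hj] at h1
  rw [h1, h2, Complex.ofReal_cos, Complex.two_cos]
  congr 2 <;> push_cast <;> ring

lemma prodLap_chr (N m : ℕ) [NeZero m] (p : Finset (Fin N) × ZMod m) :
    prodLap N m (chr N m p) = fun x => (eigv N m p : ℂ) * chr N m p x := by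
  funext x
  unfold prodLap
  rw [cubeLap_eq]
  have e1 : ∀ i : Fin N, chr N m p (x.1 + Pi.single i 1, x.2) = chr N m p x * (if i ∈ p.1 then -1 else 1) := by
    intro i
    rw [← chr_single, ← AddChar.map_add_eq_mul]; simp [Prod.add_def]
  have e2 : chr N m p (x.1, x.2 + 1) = chr N m p x * ZMod.stdAddChar p.2 := by
    have : (ZMod.stdAddChar p.2 : ℂ) = chr N m p (0, 1) := by simp [chr_apply]
    rw [this, ← AddChar.map_add_eq_mul]; simp [Prod.add_def]
  have e3 : chr N m p (x.1, x.2 - 1) = chr N m p x * ZMod.stdAddChar (-p.2) := by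
    have : (ZMod.stdAddChar (-p.2) : ℂ) = chr N m p (0, -1) := by simp [chr_apply]
    rw [this, ← AddChar.map_add_eq_mul]; simp [Prod.add_def, sub_eq_add_neg]
  have e4 : ∀ i : Fin N, chr N m p x - chr N m p x * (if i ∈ p.1 then -1 else 1)
      = if i ∈ p.1 then 2 * chr N m p x else 0 := by
    intro i; split_ifs <;> ring
  simp only [e1, e2, e3, Prod.mk.eta, e4]
  rw [Finset.sum_ite_mem, Finset.univ_inter, Finset.sum_const, nsmul_eq_mul]
  have := std_cos m p.2
  unfold eigv
  push_cast at this ⊢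
  linear_combination (-chr N m p x) * this

def prodLapL (N m : ℕ) : (Vtx N × ZMod m → ℂ) →ₗ[ℂ] (Vtx N × ZMod m → ℂ) where
  toFun := prodLap N m
  map_add' F G := by
    funext x
    simp only [prodLap, cubeLap_eq, Pi.add_apply]
    have : ∀ a : Fin N → ℂ, ∀ b c d : Fin N → ℂ, ∑ i, (a i + b i - (c i + d i)) = ∑ i, (a i - c i) + ∑ i, (b i - d i) := by
      intros; rw [← Finset.sum_add_distrib]; exact Finset.sum_congr rfl fun _ _ => by ring
    rw [this]; ring
  map_smul' c F := by
    funext x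
    simp only [prodLap, cubeLap_eq, Pi.smul_apply, smul_eq_mul, RingHom.id_apply, ← mul_sub, ← Finset.mul_sum]
    ring

lemma finrank_spec {ι V : Type*} [Fintype ι] [AddCommGroup V] [Module ℂ V] (b : Module.Basis ι ℂ V)
    (L : V →ₗ[ℂ] V) (ev : ι → ℝ) (h : ∀ i, L (b i) = (ev i : ℂ) • b i) (Ω : ℝ) :
    Module.finrank ℂ (Submodule.span ℂ {f | ∃ μ : ℝ, μ ≤ Ω ∧ L f = (μ : ℂ) • f}) =
      (Finset.univ.filter fun i => ev i ≤ Ω).card := by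
  have hs : Submodule.span ℂ {f | ∃ μ : ℝ, μ ≤ Ω ∧ L f = (μ : ℂ) • f} =
      Submodule.span ℂ (Set.range fun i : {i // ev i ≤ Ω} => b i) := by
    apply le_antisymm
    · rw [Submodule.span_le]
      rintro f ⟨μ, hμ, hf⟩
      rw [← b.sum_repr f]
      refine Submodule.sum_mem _ fun i _ => ?_
      by_cases hi : ev i ≤ Ω
      · exact Submodule.smul_mem _ _ (Submodule.subset_span ⟨⟨i, hi⟩, rfl⟩)
      · have h0 : b.repr f i = 0 := by
          have e : L f = ∑ k, (b.repr f k * ev k) • b k := by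
            conv_lhs => rw [← b.sum_repr f]
            rw [map_sum]
            exact Finset.sum_congr rfl fun k _ => by rw [map_smul, h, smul_smul]
          have e2 := congrArg (fun g => b.repr g i) (e.symm.trans hf)
          simp only [b.repr_sum_self, map_smul, Finsupp.smul_apply, smul_eq_mul] at e2
          have e3 : b.repr f i * ((ev i : ℂ) - μ) = 0 := by linear_combination e2
          rcases mul_eq_zero.1 e3 with h3 | h3
          · exact h3
          · have : ev i = μ := by exact_mod_cast sub_eq_zero.1 h3
            exact absurd (this ▸ hμ) hi
        simp [h0]
    · rw [Submodule.span_le]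
      rintro _ ⟨⟨i, hi⟩, rfl⟩
      exact Submodule.subset_span ⟨ev i, hi, h i⟩
  have li : LinearIndependent ℂ (fun i : {i // ev i ≤ Ω} => b i) :=
    b.linearIndependent.comp _ Subtype.val_injective
  rw [hs, finrank_span_eq_card li, Fintype.card_subtype]

lemma finrank_PW (N m : ℕ) [NeZero m] (Ω : ℝ) : Module.finrank ℂ (PWprod N m Ω) =
    (Finset.univ.filter fun p : Finset (Fin N) × ZMod m => eigv N m p ≤ Ω).card := by
  have li : LinearIndependent ℂ (fun p => (chr N m p : Vtx N × ZMod m → ℂ)) :=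
    (AddChar.linearIndependent (Vtx N × ZMod m) ℂ).comp _ (chr_inj N m)
  let b := basisOfLinearIndependentOfCardEqFinrank li (by simp)
  have hb : ∀ p, b p = chr N m p := fun p => by simp [b]
  have := finrank_spec b (prodLapL N m) (eigv N m) (fun p => by
    rw [hb]; exact prodLap_chr N m p) Ω
  exact this

lemma cos_lem (m' j : ℕ) (hj : j < 4 * m' + 1) :
    0 ≤ Real.cos (2 * π * j / (4 * m' + 1 : ℕ)) ↔ (j ≤ m' ∨ 3 * m' + 1 ≤ j) := by
  have hM : (0 : ℝ) < (4 * m' + 1 : ℕ) := by positivity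
  have hp := Real.pi_pos
  constructor
  · intro h
    by_contra hc
    push Not at hc
    have h1 : (m' : ℝ) + 1 ≤ j := by exact_mod_cast hc.1
    have h2 : (j : ℝ) ≤ 3 * m' := by exact_mod_cast Nat.lt_succ_iff.1 hc.2
    refine absurd h (not_le.2 (Real.cos_neg_of_pi_div_two_lt_of_lt ?_ ?_))
    · rw [lt_div_iff₀ hM]; push_cast; nlinarith
    · rw [div_lt_iff₀ hM]; push_cast; nlinarith
  · rintro (h | h)
    · have h1 : (j : ℝ) ≤ m' := by exact_mod_cast h
      apply Real.cos_nonneg_of_neg_pi_div_two_le_of_le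
      · have : 0 ≤ 2 * π * j / (4 * m' + 1 : ℕ) := by positivity
        linarith
      · rw [div_le_iff₀ hM]; push_cast; nlinarith
    · have h1 : 3 * (m' : ℝ) + 1 ≤ j := by exact_mod_cast h
      have h2 : (j : ℝ) + 1 ≤ 4 * m' + 1 := by exact_mod_cast hj
      rw [← Real.cos_sub_two_pi]
      have e : 2 * π * j / (4 * m' + 1 : ℕ) - 2 * π = (2 * π * (j - (4 * m' + 1))) / (4 * m' + 1 : ℕ) := by
        field_simp; push_cast; ring
      rw [e]
      apply Real.cos_nonneg_of_neg_pi_div_two_le_of_le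
      · rw [le_div_iff₀ hM]; push_cast; nlinarith
      · rw [div_le_iff₀ hM]; push_cast; nlinarith

lemma cos_one (m j : ℕ) (hj : j < m) : 1 ≤ Real.cos (2 * π * j / m) ↔ j = 0 := by
  have hM : (0 : ℝ) < m := by exact_mod_cast (by omega : 0 < m)
  have hp := Real.pi_pos
  constructor
  · intro h
    have h1 : Real.cos (2 * π * j / m) = 1 := le_antisymm (Real.cos_le_one _) h
    have hlt : 2 * π * j / m < 2 * π := by
      rw [div_lt_iff₀ hM]
      have : (j : ℝ) < m := by exact_mod_cast hj
      nlinarith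
    have h0 : 0 ≤ 2 * π * j / m := by positivity
    have := (Real.cos_eq_one_iff_of_lt_of_lt (by linarith) hlt).1 h1
    rw [div_eq_zero_iff] at this
    rcases this with h | h
    · have : (j : ℝ) = 0 := by
        rcases mul_eq_zero.1 h with h | h
        · linarith
        · exact h
      exact_mod_cast this
    · linarith
  · rintro rfl; simp

lemma card_val (m : ℕ) [NeZero m] (P : ℕ → Prop) :
    (Finset.univ.filter fun j : ZMod m => P j.val).card = ((Finset.range m).filter P).card := by
  refine Finset.card_bij (fun j _ => j.val) ?_ ?_ ?_
  · intro j hj; simp at hj ⊢; exact ⟨ZMod.val_lt j, hj⟩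
  · intro a _ b _ h; exact ZMod.val_injective m h
  · intro k hk
    simp at hk
    exact ⟨(k : ZMod m), by simp [ZMod.val_natCast_of_lt hk.1, hk.2], ZMod.val_natCast_of_lt hk.1⟩

def cnt (K m' k : ℕ) : ℕ :=
  if k < K - 1 then 4 * m' + 1 else if k = K - 1 then 2 * m' + 1 else if k = K then 1 else 0

lemma card_slice (K m' k : ℕ) (hK : 3 ≤ K) :
    (Finset.univ.filter fun j : ZMod (4 * m' + 1) =>
      2 * (k : ℝ) + (2 - 2 * Real.cos (2 * π * j.val / (4 * m' + 1 : ℕ))) ≤ 2 * (K : ℝ)).card = cnt K m' k := by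
  rw [card_val (4 * m' + 1) (fun j : ℕ =>
      2 * (k : ℝ) + (2 - 2 * Real.cos (2 * π * j / (4 * m' + 1 : ℕ))) ≤ 2 * (K : ℝ))]
  unfold cnt
  split_ifs with h1 h2 h3
  · rw [Finset.filter_true_of_mem, Finset.card_range]
    intro j _
    have : (k : ℝ) + 2 ≤ K := by exact_mod_cast (by omega : k + 2 ≤ K)
    have := Real.neg_one_le_cos (2 * π * j / (4 * m' + 1 : ℕ))
    linarith
  · have e : (K : ℝ) = k + 1 := by exact_mod_cast (by omega : K = k + 1)
    have : (Finset.range (4 * m' + 1)).filter (fun j : ℕ =>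
      2 * (k : ℝ) + (2 - 2 * Real.cos (2 * π * j / (4 * m' + 1 : ℕ))) ≤ 2 * (K : ℝ)) =
        Finset.range (m' + 1) ∪ Finset.Ico (3 * m' + 1) (4 * m' + 1) := by
      ext j
      simp only [Finset.mem_filter, Finset.mem_range, Finset.mem_union, Finset.mem_Ico]
      constructor
      · rintro ⟨hj, h⟩
        have := (cos_lem m' j hj).1 (by linarith)
        omega
      · intro h
        have hj : j < 4 * m' + 1 := by omega
        have := (cos_lem m' j hj).2 (by omega)
        exact ⟨hj, by linarith⟩
    rw [this, Finset.card_union_of_disjoint]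
    · simp; omega
    · rw [Finset.disjoint_left]; intro a; simp; omega
  · subst h3
    have : (Finset.range (4 * m' + 1)).filter (fun j : ℕ =>
      2 * (k : ℝ) + (2 - 2 * Real.cos (2 * π * j / (4 * m' + 1 : ℕ))) ≤ 2 * (k : ℝ)) = {0} := by
      ext j
      simp only [Finset.mem_filter, Finset.mem_range, Finset.mem_singleton]
      constructor
      · rintro ⟨hj, h⟩
        exact (cos_one _ j hj).1 (by linarith)
      · intro h
        have hj : j < 4 * m' + 1 := by omega
        have := (cos_one _ j hj).2 h
        exact ⟨hj, by linarith⟩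
    rw [this]; simp
  · rw [Finset.filter_false_of_mem, Finset.card_empty]
    intro j _
    have : (K : ℝ) + 1 ≤ k := by exact_mod_cast (by omega : K + 1 ≤ k)
    have := Real.cos_le_one (2 * π * j / (4 * m' + 1 : ℕ))
    linarith

/-- for m = 4m'+1 and 3 ≤ K < N,
dim PW_{2K}(B_N □ C_m) = m·Σ_{κ=0}^{K−2} binom(N,κ)
+ ((m+1)/2)·binom(N,K−1) + binom(N,K). -/
theorem stmt17 (N K m' : ℕ) (hm' : 1 ≤ m') (hK : 3 ≤ K) (hKN : K < N) :
    Module.finrank ℂ (PWprod N (4 * m' + 1) (2 * (K : ℝ))) =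
      (4 * m' + 1) * ∑ κ ∈ Finset.range (K - 1), N.choose κ +
        ((4 * m' + 1 + 1) / 2) * N.choose (K - 1) + N.choose K := by
  rw [finrank_PW]
  have h1 : (Finset.univ.filter fun p : Finset (Fin N) × ZMod (4 * m' + 1) =>
      eigv N (4 * m' + 1) p ≤ 2 * (K : ℝ)).card = ∑ S : Finset (Fin N), cnt K m' S.card := by
    rw [Finset.card_filter, Fintype.sum_prod_type]
    refine Finset.sum_congr rfl fun S _ => ?_
    rw [← card_slice K m' S.card hK, Finset.card_filter]
    rfl
  rw [h1, ← Finset.powerset_univ, Finset.sum_powerset_apply_card (fun k => cnt K m' k)]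
  simp only [Finset.card_univ, Fintype.card_fin, smul_eq_mul]
  have h2 : ∑ k ∈ Finset.range (N + 1), N.choose k * cnt K m' k =
      ∑ k ∈ Finset.range (K + 1), N.choose k * cnt K m' k := by
    symm
    apply Finset.sum_subset
    · intro a; simp; omega
    · intro k _ hk
      simp at hk
      have : cnt K m' k = 0 := by
        unfold cnt
        rw [if_neg (by omega), if_neg (by omega), if_neg (by omega)]
      rw [this, mul_zero]
  rw [h2]
  obtain ⟨L, rfl⟩ : ∃ L, K = L + 1 := ⟨K - 1, by omega⟩
  rw [Finset.sum_range_succ, Finset.sum_range_succ]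
  have c1 : cnt (L + 1) m' (L + 1) = 1 := by simp [cnt]
  have c2 : cnt (L + 1) m' L = 2 * m' + 1 := by simp [cnt]
  have c3 : ∀ k ∈ Finset.range L, N.choose k * cnt (L + 1) m' k = (4 * m' + 1) * N.choose k := by
    intro k hk
    simp at hk
    simp [cnt, hk, mul_comm]
  rw [Finset.sum_congr rfl c3, c1, c2, ← Finset.mul_sum, show (4 * m' + 1 + 1) / 2 = 2 * m' + 1 by omega]
  simp
  ring
end
end
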